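/- Let R be a Noetherian ring and 𝔞 an ideal with dim R/𝔞 = 1. If f : M → N is a homomorphism of 𝔞-weakly cofinite R-modules, then ker f and coker f are 𝔞-weakly cofinite; thus the category of 𝔞-weakly cofinite R-modules is a full Abelian subcategory of the category of R-modules. -/

import Mathlib

open CategoryTheory

universe u

variable (R : Type u) [CommRing R]

/-- The `i`-th Ext module `Ext^i_R(N, M)` of `R`-modules. -/
noncomputable def extModule (i : ℕ) (N M : ModuleCat.{u} R) : ModuleCat.{u} R :=
  ((Ext R (ModuleCat.{u} R) i).obj (Opposite.op N)).obj M

/-- A module is weakly Laskerian if every quotient has finitely many associated primes. -/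
def IsWeaklyLaskerian (M : Type u) [AddCommGroup M] [Module R M] : Prop :=
  ∀ N : Submodule R M, (associatedPrimes R (M ⧸ N)).Finite

/-- `M` is `𝔞`-cofinite: `Supp M ⊆ V(𝔞)` and all `Ext^i_R(R/𝔞, M)` are finitely generated. -/
def IsCofinite (𝔞 : Ideal R) (M : ModuleCat.{u} R) : Prop :=
  Module.support R M ⊆ PrimeSpectrum.zeroLocus (𝔞 : Set R) ∧
    ∀ i : ℕ, Module.Finite R (extModule R i (ModuleCat.of R (R ⧸ 𝔞)) M)

/-- `M` is `𝔞`-weakly cofinite: `Supp M ⊆ V(𝔞)` and all `Ext^i_R(R/𝔞, M)` are weakly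
Laskerian. -/
def IsWeaklyCofinite (𝔞 : Ideal R) (M : ModuleCat.{u} R) : Prop :=
  Module.support R M ⊆ PrimeSpectrum.zeroLocus (𝔞 : Set R) ∧
    ∀ i : ℕ, IsWeaklyLaskerian R (extModule R i (ModuleCat.of R (R ⧸ 𝔞)) M)

/-- The Krull dimension of the support of a module. -/
noncomputable def suppDim (M : Type u) [AddCommGroup M] [Module R M] : WithBot ℕ∞ :=
  Order.krullDim (Module.support R M)

/-- The cohomological dimension `cd(𝔞, M) = sup {i | H^i_𝔞(M) ≠ 0}`, as an element of `ℕ∞`. -/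
noncomputable def cohomologicalDim (𝔞 : Ideal R) (M : ModuleCat.{u} R) : ℕ∞ :=
  ⨆ i ∈ {i : ℕ | Nontrivial ((localCohomology 𝔞 i).obj M)}, (i : ℕ∞)

/-- `p` is an attached prime of `M`: `p` is prime and is the annihilator of a quotient
of `M`. -/
def IsAttachedPrime (M : Type u) [AddCommGroup M] [Module R M] (p : Ideal R) : Prop :=
  p.IsPrime ∧ ∃ N : Submodule R M, p = Module.annihilator R (M ⧸ N)

lemma extMk_eq_zero_iff_zero {X Y : ModuleCat.{u} R} (P : ProjectiveResolution X)
    (f : P.complex.X 0 ⟶ Y) (hf : P.complex.d 1 0 ≫ f = 0) :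
    P.extMk f 1 rfl hf = 0 ↔ f = 0 := by
  constructor
  · intro h
    rw [← P.extEquivCohomologyClass.apply_eq_iff_eq,
      ProjectiveResolution.extEquivCohomologyClass_extMk,
      ProjectiveResolution.extEquivCohomologyClass_zero,
      CochainComplex.HomComplex.CohomologyClass.mk_eq_zero_iff] at h
    erw [CochainComplex.HomComplex.Cocycle.toSingleMk_mem_coboundaries_iff _ _ _ _ _ 1 (by simp)] at h
    obtain ⟨g, hg⟩ := h
    have hz : Limits.IsZero (P.cochainComplex.X 1) :=
      CochainComplex.isZero_of_isStrictlyLE _ 0 _ (by norm_num)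
    have : g = 0 := hz.eq_of_src _ _
    rw [this, Limits.comp_zero] at hg
    exact (cancel_epi (P.cochainComplexXIso (-(0:ℕ)) 0 rfl).hom).1 (by rw [← hg, Limits.comp_zero])
  · rintro rfl
    exact P.extMk_zero 1 rfl

lemma smul_extMk {X Y : ModuleCat.{u} R} (P : ProjectiveResolution X) {n : ℕ} (r : R)
    (f : P.complex.X n ⟶ Y) (hf : P.complex.d (n+1) n ≫ f = 0) :
    r • P.extMk f (n+1) rfl hf = P.extMk (r • f) (n+1) rfl (by simp [hf]) := by
  rw [Abelian.Ext.smul_eq_comp_mk₀, ProjectiveResolution.extMk_comp_mk₀]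
  congr 1

lemma nonempty_extModule_equiv (n : ℕ) (X Y : ModuleCat.{u} R) :
    Nonempty (extModule R n X Y ≃ₗ[R] Abelian.Ext.{u} X Y n) := by
  obtain ⟨P⟩ := (inferInstance : HasProjectiveResolution X).out
  let E := P.complex.linearYonedaObj R Y
  obtain ⟨i, hi⟩ : ∃ i, (ComplexShape.up ℕ).prev n = i := ⟨_, rfl⟩
  have hn : (ComplexShape.up ℕ).next n = n + 1 := by simp
  let S := E.sc' i n (n+1)
  let e1 : extModule R n X Y ≅ E.homology n := P.isoExt n Y
  let e2 : E.homology n ≅ S.homology := E.homologyIsoSc' i n (n+1) hi hn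
  let e3 := S.moduleCatHomologyIso
  let e : extModule R n X Y ≃ₗ[R] S.moduleCatLeftHomologyData.H := (e1 ≪≫ e2 ≪≫ e3).toLinearEquiv
  let φ : LinearMap.ker S.g.hom →ₗ[R] Abelian.Ext.{u} X Y n :=
    { toFun := fun f => P.extMk (n := n) (Y := Y) f.1 (n+1) rfl f.2
      map_add' := fun f g => (P.add_extMk _ _ _ _ _ _).symm
      map_smul' := fun r f => (smul_extMk R P r _ _).symm }
  have hφ : Function.Surjective φ := by
    intro α
    obtain ⟨f, hf, rfl⟩ := P.extMk_surjective α (n+1) rfl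
    exact ⟨⟨f, hf⟩, rfl⟩
  have hk : LinearMap.ker φ = LinearMap.range S.moduleCatToCycles := by
    ext ⟨f, hf⟩
    have h2 : (⟨f, hf⟩ : LinearMap.ker S.g.hom) ∈ LinearMap.range S.moduleCatToCycles ↔
        ∃ g, S.f.hom g = f := by
      constructor
      · rintro ⟨g, hg⟩
        exact ⟨g, congrArg Subtype.val hg⟩
      · rintro ⟨g, hg⟩
        exact ⟨g, Subtype.ext hg⟩
    rw [h2, LinearMap.mem_ker]
    cases n with
    | zero =>
      refine (extMk_eq_zero_iff_zero R P f hf).trans ?_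
      have hS : S.f = 0 := E.shape _ _ (by simp)
      rw [hS]
      constructor
      · rintro rfl
        exact ⟨0, by simp; rfl⟩
      · rintro ⟨g, hg⟩
        rw [← hg]; simp; rfl
    | succ p =>
      have hi' : p = i := by simpa using hi
      refine (P.extMk_eq_zero_iff (Y := Y) f _ rfl hf p rfl).trans ?_
      subst hi'
      rfl
  exact ⟨e.trans ((Submodule.quotEquivOfEq _ _ hk.symm).trans (φ.quotKerEquivOfSurjective hφ))⟩

namespace WL

variable {R}
variable {A B C : Type u} [AddCommGroup A] [Module R A] [AddCommGroup B] [Module R B]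
  [AddCommGroup C] [Module R C]

lemma of_exact (f : A →ₗ[R] B) (g : B →ₗ[R] C) (h : LinearMap.ker g ≤ LinearMap.range f)
    (hA : IsWeaklyLaskerian R A) (hC : IsWeaklyLaskerian R C) : IsWeaklyLaskerian R B := by
  intro N
  let f' : (A ⧸ N.comap f) →ₗ[R] (B ⧸ N) := (N.comap f).mapQ N f le_rfl
  let N' : Submodule R C := (N ⊔ LinearMap.range f).map g
  let g1 : B →ₗ[R] (C ⧸ N') := N'.mkQ ∘ₗ g
  let g' : (B ⧸ N) →ₗ[R] (C ⧸ N') := N.mapQ N' g (by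
    intro n hn
    exact ⟨n, Submodule.mem_sup_left hn, rfl⟩)
  refine Set.Finite.subset ((hA (N.comap f)).union (hC N'))
    (associatedPrimes.subset_union_of_exact (f := f') (g := g') ?_ ?_)
  · rw [← LinearMap.ker_eq_bot]
    exact Submodule.ker_liftQ_eq_bot _ _ _ (by
      intro a ha
      simpa using ha)
  · intro b
    obtain ⟨b, rfl⟩ := Submodule.Quotient.mk_surjective _ b
    constructor
    · intro hb
      have hb : g b ∈ N' := (Submodule.Quotient.mk_eq_zero N').1 hb
      obtain ⟨n, hn, hg⟩ := hb
      obtain ⟨n1, hn1, n2, ⟨a, rfl⟩, rfl⟩ := Submodule.mem_sup.1 hn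
      have : b - (n1 + f a) ∈ LinearMap.ker g := by
        rw [LinearMap.mem_ker, map_sub, hg, sub_self]
      obtain ⟨a', ha'⟩ := h this
      refine ⟨Submodule.Quotient.mk (a' + a), ?_⟩
      change Submodule.Quotient.mk (f (a' + a)) = _
      rw [Submodule.Quotient.eq, map_add, ha']
      have : b - (n1 + f a) + f a - b = - n1 := by abel
      rw [this]
      exact N.neg_mem hn1
    · rintro ⟨a, ha⟩
      obtain ⟨a, rfl⟩ := Submodule.Quotient.mk_surjective _ a
      rw [← ha]
      change Submodule.Quotient.mk (g (f a)) = 0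
      rw [Submodule.Quotient.mk_eq_zero]
      exact ⟨f a, Submodule.mem_sup_right ⟨a, rfl⟩, rfl⟩

lemma of_subsingleton [Subsingleton A] : IsWeaklyLaskerian R A := by
  intro N
  rw [associatedPrimes.eq_empty_of_subsingleton]
  exact Set.finite_empty

lemma of_injective (g : B →ₗ[R] C) (h : Function.Injective g)
    (hC : IsWeaklyLaskerian R C) : IsWeaklyLaskerian R B :=
  of_exact (0 : PUnit.{u+1} →ₗ[R] B) g (by rw [LinearMap.ker_eq_bot.2 h]; exact bot_le)
    of_subsingleton hC

lemma of_surjective (f : A →ₗ[R] B) (h : Function.Surjective f)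
    (hA : IsWeaklyLaskerian R A) : IsWeaklyLaskerian R B :=
  of_exact f (0 : B →ₗ[R] PUnit.{u+1}) (by rw [LinearMap.range_eq_top.2 h]; exact le_top)
    hA of_subsingleton

lemma iff_of_equiv (e : A ≃ₗ[R] B) : IsWeaklyLaskerian R A ↔ IsWeaklyLaskerian R B :=
  ⟨of_surjective e.toLinearMap e.surjective, of_injective e.toLinearMap e.injective⟩

lemma pi_fin (hA : IsWeaklyLaskerian R A) (n : ℕ) : IsWeaklyLaskerian R (Fin n → A) := by
  induction n with
  | zero => exact of_subsingleton
  | succ n ih =>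
    refine of_exact (A := A) (C := Fin n → A) (LinearMap.single R (fun _ : Fin (n+1) => A) 0)
      (LinearMap.funLeft R A Fin.succ) ?_ hA ih
    intro v hv
    refine ⟨v 0, ?_⟩
    ext i
    refine Fin.cases ?_ (fun j => ?_) i
    · simp
    · have := congrFun (LinearMap.mem_ker.1 hv) j
      simp [LinearMap.funLeft_apply] at this
      simp [this]

lemma of_finite_support [IsNoetherianRing R] (h : (Module.support R A).Finite) :
    IsWeaklyLaskerian R A := by
  intro N
  refine Set.Finite.subset (h.image PrimeSpectrum.asIdeal) ?_
  intro p hp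
  have := hp.isPrime
  refine ⟨⟨p, this⟩, ?_, rfl⟩
  refine Module.support_subset_of_surjective N.mkQ N.mkQ_surjective ?_
  obtain ⟨_, x, hx⟩ := isAssociatedPrime_iff.1 hp
  rw [Module.mem_support_iff_exists_annihilator]
  refine ⟨x, ?_⟩
  change _ ≤ p
  rw [hx]
  intro r hr
  simpa [Submodule.mem_annihilator_span_singleton] using hr

/-- Ext from `R/𝔞`. -/
abbrev E (𝔞 : Ideal R) (i : ℕ) (M : Type u) [AddCommGroup M] [Module R M] : Type u :=
  Abelian.Ext.{u} (ModuleCat.of R (R ⧸ 𝔞)) (ModuleCat.of R M) i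

lemma ext_finite_left [IsNoetherianRing R] (N M : ModuleCat.{u} R) [Module.Finite R N]
    (hM : IsWeaklyLaskerian R M) (i : ℕ) : IsWeaklyLaskerian R (Abelian.Ext.{u} N M i) := by
  induction i generalizing N with
  | zero =>
    rw [iff_of_equiv (Abelian.Ext.linearEquiv₀.trans ModuleCat.homLinearEquiv)]
    obtain ⟨n, f, hf⟩ := Module.Finite.exists_fin' R N
    refine of_injective (C := Fin n → M)
      ((LinearMap.lsum R (fun _ : Fin n => R) R).symm.toLinearMap ∘ₗ (LinearMap.lcomp R M f) |> fun g =>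
        (LinearMap.pi fun i => (LinearMap.applyₗ (1 : R)) ∘ₗ (LinearMap.proj i) ∘ₗ g)) ?_ (pi_fin hM n)
    intro a b hab
    ext x
    obtain ⟨y, rfl⟩ := hf x
    have h2 : a ∘ₗ f = b ∘ₗ f := by
      ext i
      simpa using congrFun hab i
    exact LinearMap.congr_fun h2 y
  | succ n ih =>
    obtain ⟨N, _, _, _, _, f, surjf⟩ := Module.exists_finite_presentation R N
    let exac := LinearMap.shortExact_shortComplexKer surjf
    exact of_surjective (exac.extClass.precompOfLinear R M (add_comm 1 n))
      (precomp_extClass_surjective_of_projective_X₂ M exac n) (ih _)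

section
variable (𝔞 : Ideal R) (f : A →ₗ[R] B) (g : B →ₗ[R] C)

lemma shortExact (hf : Function.Injective f) (hfg : Function.Exact f g)
    (hg : Function.Surjective g) :
    (ShortComplex.mk (ModuleCat.ofHom f) (ModuleCat.ofHom g)
      (by ext x; exact hfg.apply_apply_eq_zero x)).ShortExact where
  exact := by
    rw [ShortComplex.moduleCat_exact_iff]
    exact fun x hx => (hfg x).1 hx
  mono_f := (ModuleCat.mono_iff_injective _).2 hf
  epi_g := (ModuleCat.epi_iff_surjective _).2 hg

lemma ext_mid (hf : Function.Injective f) (hfg : Function.Exact f g)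
    (hg : Function.Surjective g) (i : ℕ) (h1 : IsWeaklyLaskerian R (E 𝔞 i A))
    (h2 : IsWeaklyLaskerian R (E 𝔞 i C)) : IsWeaklyLaskerian R (E 𝔞 i B) := by
  have S := shortExact f g hf hfg hg
  refine of_exact ((Abelian.Ext.mk₀ (ModuleCat.ofHom f)).postcompOfLinear R _ (add_zero i))
    ((Abelian.Ext.mk₀ (ModuleCat.ofHom g)).postcompOfLinear R _ (add_zero i)) ?_ h1 h2
  intro x hx
  exact Abelian.Ext.covariant_sequence_exact₂ _ S x hx

lemma ext_right (hf : Function.Injective f) (hfg : Function.Exact f g)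
    (hg : Function.Surjective g) (i : ℕ) (h1 : IsWeaklyLaskerian R (E 𝔞 i B))
    (h2 : IsWeaklyLaskerian R (E 𝔞 (i+1) A)) : IsWeaklyLaskerian R (E 𝔞 i C) := by
  have S := shortExact f g hf hfg hg
  refine of_exact
    ((Abelian.Ext.mk₀ (ModuleCat.ofHom g)).postcompOfLinear R _ (add_zero i))
    (S.extClass.postcompOfLinear R _ rfl) ?_ h1 h2
  intro x hx
  exact Abelian.Ext.covariant_sequence_exact₃ _ S x rfl hx

lemma ext_left (hf : Function.Injective f) (hfg : Function.Exact f g)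
    (hg : Function.Surjective g) (i : ℕ) (h1 : IsWeaklyLaskerian R (E 𝔞 i C))
    (h2 : IsWeaklyLaskerian R (E 𝔞 (i+1) B)) : IsWeaklyLaskerian R (E 𝔞 (i+1) A) := by
  have S := shortExact f g hf hfg hg
  refine of_exact (S.extClass.postcompOfLinear R _ rfl)
    ((Abelian.Ext.mk₀ (ModuleCat.ofHom f)).postcompOfLinear R _ (add_zero (i+1))) ?_ h1 h2
  intro x hx
  exact Abelian.Ext.covariant_sequence_exact₁ _ S x hx rfl

lemma ext_zero_injective (hf : Function.Injective f) :
    Function.Injective ((Abelian.Ext.mk₀ (ModuleCat.ofHom f)).postcompOfLinear R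
      (ModuleCat.of R (R ⧸ 𝔞)) (add_zero 0)) := by
  have : Mono (ModuleCat.ofHom f) := (ModuleCat.mono_iff_injective _).2 hf
  exact Abelian.Ext.postcomp_mk₀_injective_of_mono _ (ModuleCat.ofHom f)

lemma ext_zero (hf : Function.Injective f) (h : IsWeaklyLaskerian R (E 𝔞 0 B)) :
    IsWeaklyLaskerian R (E 𝔞 0 A) :=
  of_injective _ (ext_zero_injective 𝔞 f hf) h

lemma ext_smul_eq_zero {X Y : ModuleCat.{u} R} (x : R) (hx : x ∈ Module.annihilator R X) (i : ℕ)
    (h : Abelian.Ext.{u} X Y i) : x • h = 0 := by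
  have : x • 𝟙 X = 0 := by
    simp [← ModuleCat.lsmul_eq_smul_id, Module.mem_annihilator_iff_lsmul_eq_zero.mp hx]
  have smul_eq : x • h = (Abelian.Ext.mk₀ (x • 𝟙 X)).comp h (zero_add i) := by
    simp [Abelian.Ext.mk₀_smul]
  rw [smul_eq, this]
  simp

/-- Melkersson's lemma. -/
lemma ext_of_smul (x : R) (hx : x ∈ 𝔞)
    (hK : ∀ i, IsWeaklyLaskerian R (E 𝔞 i (LinearMap.ker (LinearMap.lsmul R B x))))
    (hQ : ∀ i, IsWeaklyLaskerian R (E 𝔞 i (B ⧸ (LinearMap.range (LinearMap.lsmul R B x))))) (i : ℕ) :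
    IsWeaklyLaskerian R (E 𝔞 i B) := by
  let μ := LinearMap.lsmul R B x
  let p := μ.rangeRestrict
  let j := (LinearMap.range μ).subtype
  have S1 := shortExact (LinearMap.ker μ).subtype p (Submodule.injective_subtype _) (by
    intro b
    simp [p, μ, ← LinearMap.mem_ker]) μ.surjective_rangeRestrict
  have S2 := shortExact j (LinearMap.range μ).mkQ (Submodule.injective_subtype _) (by
    intro b
    simp [j]) (Submodule.mkQ_surjective _)
  let F := (Abelian.Ext.mk₀ (ModuleCat.ofHom p)).postcompOfLinear R
    (ModuleCat.of R (R ⧸ 𝔞)) (add_zero i)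
  let G := (Abelian.Ext.mk₀ (ModuleCat.ofHom j)).postcompOfLinear R
    (ModuleCat.of R (R ⧸ 𝔞)) (add_zero i)
  have hGF : ∀ y, G (F y) = 0 := by
    intro y
    have h1 : G (F y) = y.comp (Abelian.Ext.mk₀ (ModuleCat.ofHom p ≫ ModuleCat.ofHom j)) (add_zero i) := by
      rw [← Abelian.Ext.mk₀_comp_mk₀]
      simp [G, F]
    have h2 : ModuleCat.ofHom p ≫ ModuleCat.ofHom j = x • 𝟙 (ModuleCat.of R B) := by
      ext b
      rfl
    rw [h1, h2, ← Abelian.Ext.smul_eq_comp_mk₀]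
    refine ext_smul_eq_zero x ?_ i y
    change x ∈ Module.annihilator R (R ⧸ 𝔞)
    rwa [Ideal.annihilator_quotient]
  have hG : IsWeaklyLaskerian R (LinearMap.ker G) := by
    cases i with
    | zero =>
      have : LinearMap.ker G = ⊥ := LinearMap.ker_eq_bot.2
        (ext_zero_injective 𝔞 j (Submodule.injective_subtype _))
      rw [this]
      exact of_subsingleton
    | succ n =>
      let D := S2.extClass.postcompOfLinear R (ModuleCat.of R (R ⧸ 𝔞)) (rfl : n + 1 = n + 1)
      refine of_exact (A := LinearMap.range D) (C := PUnit.{u+1}) (Submodule.inclusion ?_) 0 ?_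
        (of_surjective D.rangeRestrict D.surjective_rangeRestrict (hQ n)) of_subsingleton
      · rintro _ ⟨y, rfl⟩
        rw [LinearMap.mem_ker]
        have : (D y).comp (Abelian.Ext.mk₀ (ModuleCat.ofHom j)) (add_zero _) = 0 := by
          change (y.comp S2.extClass rfl).comp (Abelian.Ext.mk₀ (ModuleCat.ofHom j)) (add_zero _) = 0
          rw [Abelian.Ext.comp_assoc _ _ _ rfl (add_zero 1) (by simp)]
          have := S2.extClass_comp
          dsimp at this
          rw [this, Abelian.Ext.comp_zero]
        exact this
      · rintro ⟨y, hy⟩ -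
        obtain ⟨z, hz⟩ := Abelian.Ext.covariant_sequence_exact₁ _ S2 y hy rfl
        exact ⟨⟨y, z, hz⟩, rfl⟩
  refine of_exact ((Abelian.Ext.mk₀ (ModuleCat.ofHom (LinearMap.ker μ).subtype)).postcompOfLinear R
    (ModuleCat.of R (R ⧸ 𝔞)) (add_zero i)) (F.codRestrict (LinearMap.ker G) hGF) ?_ (hK i) hG
  intro y hy
  have hy : F y = 0 := congrArg Subtype.val hy
  exact Abelian.Ext.covariant_sequence_exact₂ _ S1 y hy

end
end WL

namespace WL
section Alg
variable {A : Type*} [CommRing A] {L : Type*} [AddCommGroup L] [Module A L]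

/-- Elements killed by an ideal. -/
def tors (I : Ideal A) (L : Type*) [AddCommGroup L] [Module A L] : Submodule A L where
  carrier := {x | ∀ a ∈ I, a • x = 0}
  add_mem' := fun {x y} hx hy a ha => by rw [smul_add, hx a ha, hy a ha, add_zero]
  zero_mem' := fun a _ => smul_zero a
  smul_mem' := fun c x hx a ha => by rw [smul_comm, hx a ha, smul_zero]

lemma mem_tors {I : Ideal A} {x : L} : x ∈ tors I L ↔ ∀ a ∈ I, a • x = 0 := Iff.rfl

lemma tors_anti {I J : Ideal A} (h : I ≤ J) : tors J L ≤ tors I L :=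
  fun _ hx a ha => hx a (h ha)

/-- There is an exact sequence tors J -> tors (I * J) -> (tors I)^k. -/
lemma tors_mul_exact (I J : Ideal A) (hJ : J.FG) : ∃ (k : ℕ)
    (f : tors J L →ₗ[A] tors (I * J) L)
    (g : tors (I * J) L →ₗ[A] (Fin k → tors I L)), LinearMap.range f = LinearMap.ker g := by
  obtain ⟨k, y, hy⟩ := Submodule.fg_iff_exists_fin_generating_family.mp hJ
  have hyJ : ∀ i, y i ∈ J := fun i => hy ▸ Submodule.subset_span ⟨i, rfl⟩
  refine ⟨k, Submodule.inclusion (tors_anti Ideal.mul_le_right), LinearMap.pi fun i =>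
    ((LinearMap.lsmul A L (y i)).restrict (p := tors (I * J) L) (q := tors I L) ?_), ?_⟩
  · intro x hx a ha
    rw [LinearMap.lsmul_apply, smul_smul]
    exact hx _ (Ideal.mul_mem_mul ha (hyJ i))
  · ext ⟨x, hx⟩
    simp only [LinearMap.mem_range, LinearMap.mem_ker]
    constructor
    · rintro ⟨⟨z, hz⟩, h⟩
      have : z = x := congrArg Subtype.val h
      subst this
      ext i
      exact hz _ (hyJ i)
    · intro h
      refine ⟨⟨x, ?_⟩, rfl⟩
      intro a ha
      have h1 : ∀ i, y i • x = 0 := fun i => congrArg Subtype.val (congrFun h i)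
      have : J ≤ Submodule.comap (LinearMap.toSpanSingleton A L x) ⊥ := by
        rw [← hy, Submodule.span_le]
        rintro _ ⟨i, rfl⟩
        simpa using h1 i
      simpa using this ha

lemma artinian_tors_mul (I J : Ideal A) (hJ : J.FG) (h1 : IsArtinian A (tors I L))
    (h2 : IsArtinian A (tors J L)) : IsArtinian A (tors (I * J) L) := by
  obtain ⟨k, f, g, h⟩ := tors_mul_exact (L := L) I J hJ
  exact isArtinian_of_range_eq_ker f g h

lemma artinian_of_le {N P : Submodule A L} (h : N ≤ P) (hP : IsArtinian A P) : IsArtinian A N :=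
  isArtinian_of_injective (Submodule.inclusion h) (Submodule.inclusion_injective h)

/-- If L is x-torsion and ker x is Artinian then L is Artinian. -/
lemma artinian_of_ker (x : A) (ht : ∀ l : L, ∃ n : ℕ, x ^ n • l = 0)
    (h : IsArtinian A (tors (Ideal.span {x}) L)) : IsArtinian A L := by
  rw [← monotone_stabilizes_iff_artinian]
  intro f
  set N : ℕ → Submodule A L := fun i => OrderDual.ofDual (f i) with hN
  have hanti : ∀ {i j}, i ≤ j → N j ≤ N i := fun {i j} hij => f.monotone hij
  let T := tors (Ideal.span {x}) L
  have memT : ∀ {l : L}, l ∈ T ↔ x • l = 0 := by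
    intro l
    constructor
    · intro hl
      exact hl x (Ideal.mem_span_singleton_self x)
    · intro hl a ha
      obtain ⟨c, rfl⟩ := Ideal.mem_span_singleton'.mp ha
      rw [mul_smul, hl, smul_zero]
  -- G i j = x^j (N_i ∩ ker x^(j+1)) as a submodule of T
  let G : ℕ → ℕ → Submodule A T := fun i j =>
    (Submodule.map (LinearMap.lsmul A L (x ^ j)) (N i)).comap T.subtype
  have memG : ∀ {i j} {t : T}, t ∈ G i j ↔ ∃ l ∈ N i, x ^ j • l = t := by
    intro i j t
    simp [G, Submodule.mem_map]
  have Gi : ∀ {i i' j}, i ≤ i' → G i' j ≤ G i j := by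
    intro i i' j hij t ht
    obtain ⟨l, hl, h⟩ := memG.mp ht
    exact memG.mpr ⟨l, hanti hij hl, h⟩
  have Gj : ∀ {i j j'}, j ≤ j' → G i j' ≤ G i j := by
    intro i j j' hij t ht
    obtain ⟨l, hl, h⟩ := memG.mp ht
    refine memG.mpr ⟨x ^ (j' - j) • l, (N i).smul_mem _ hl, ?_⟩
    rw [smul_smul, ← pow_add, Nat.add_sub_cancel' hij, h]
  have stab : ∀ F : ℕ → Submodule A T, (∀ i j, i ≤ j → F j ≤ F i) →
      ∃ n, ∀ m, n ≤ m → F n = F m := by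
    intro F hF
    exact IsArtinian.monotone_stabilizes ⟨fun i => OrderDual.toDual (F i), fun i j hij => hF i j hij⟩
  obtain ⟨n0, hn0⟩ := stab (fun i => G i i) fun i j hij => (Gi hij).trans (Gj hij)
  have hcol : ∀ j, ∃ n, ∀ m, n ≤ m → G n j = G m j := fun j =>
    stab (fun i => G i j) fun i i' hij => Gi hij
  choose c hc using hcol
  let i0 := max n0 ((Finset.range n0).sup c)
  have hG : ∀ j i, i0 ≤ i → G i0 j ≤ G i j := by
    intro j i hi
    by_cases hj : j < n0
    · have hcj : c j ≤ i0 := (Finset.le_sup (f := c) (Finset.mem_range.mpr hj)).trans (le_max_right _ _)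
      rw [← hc j i0 hcj, ← hc j i (hcj.trans hi)]
    · push Not at hj
      have h1 : n0 ≤ i0 := le_max_left _ _
      calc G i0 j ≤ G n0 n0 := (Gi h1).trans (Gj hj)
        _ = G (max i j) (max i j) := hn0 _ ((h1.trans hi).trans (le_max_left _ _))
        _ ≤ G i j := (Gi (le_max_left _ _)).trans (Gj (le_max_right _ _))
  refine ⟨i0, fun i hi => ?_⟩
  have key : ∀ k, ∀ l ∈ N i0, x ^ k • l = 0 → l ∈ N i := by
    intro k
    induction k with
    | zero => intro l _ h0; rw [pow_zero, one_smul] at h0; rw [h0]; exact (N i).zero_mem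
    | succ k ih =>
      intro l hl h0
      have hT : x ^ k • l ∈ T := by rw [memT, smul_smul, ← pow_succ', h0]
      have : (⟨x ^ k • l, hT⟩ : T) ∈ G i0 k := memG.mpr ⟨l, hl, rfl⟩
      obtain ⟨l', hl', he⟩ := memG.mp (hG k i hi this)
      have h2 : l - l' ∈ N i := by
        refine ih _ ((N i0).sub_mem hl (hanti hi hl')) ?_
        rw [smul_sub, he, sub_self]
      simpa using (N i).add_mem h2 hl'
  have : N i0 = N i := le_antisymm (fun l hl => by
    obtain ⟨k, hk⟩ := ht l
    exact key k l hl hk) (hanti hi)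
  exact this

/-- If L is I-torsion, I finitely generated, and tors I is Artinian, then L is Artinian. -/
lemma artinian_of_tors (I : Ideal A) (hI : I.FG) (ht : ∀ l : L, ∀ x ∈ I, ∃ n : ℕ, x ^ n • l = 0)
    (h : IsArtinian A (tors I L)) : IsArtinian A L := by
  classical
  obtain ⟨s, rfl⟩ := hI
  revert ht h
  induction s using Finset.induction_on generalizing L with
  | empty =>
    intro _ h
    have : tors (Ideal.span ((∅ : Finset A) : Set A)) L = ⊤ := by
      ext l; simp [mem_tors]
    change IsArtinian A (tors (Ideal.span ((∅ : Finset A) : Set A)) L) at h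
    rw [this] at h
    exact isArtinian_of_surjective (⊤ : Submodule A L) (Submodule.subtype ⊤) (fun x => ⟨⟨x, trivial⟩, rfl⟩)
  | insert x s hx ih =>
    intro ht h
    have hxs : ∀ y ∈ insert x s, y ∈ Submodule.span A ((insert x s : Finset A) : Set A) :=
      fun y hy => Submodule.subset_span (by exact_mod_cast hy)
    refine artinian_of_ker x (fun l => ht l x (hxs x (by simp))) ?_
    have hle : Submodule.span A (s : Set A) ≤ Submodule.span A ((insert x s : Finset A) : Set A) :=
      Submodule.span_mono (by simp)
    refine ih (L := tors (Ideal.span {x}) L) ?_ ?_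
    · intro l y hy
      obtain ⟨n, hn⟩ := ht l y (hle hy)
      exact ⟨n, Subtype.ext hn⟩
    · let φ : tors (Submodule.span A (s : Set A)) (tors (Ideal.span {x}) L) →ₗ[A]
          tors (Submodule.span A ((insert x s : Finset A) : Set A)) L :=
        LinearMap.restrict (Submodule.subtype _) (by
          rintro ⟨l, hl⟩ hl2 a ha
          rw [Finset.coe_insert] at ha
          obtain ⟨c, z, hz, rfl⟩ := Submodule.mem_span_insert.mp ha
          have := congrArg Subtype.val (hl2 z hz)
          have h2 := hl x (Ideal.mem_span_singleton_self x)
          simp only [Submodule.coe_smul, ZeroMemClass.coe_zero] at this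
          simp [add_smul, mul_smul, this, h2])
      refine isArtinian_of_injective φ ?_
      intro a b hab
      exact Subtype.ext (Subtype.ext (by have h3 := congrArg Subtype.val hab; exact h3))

end Alg
end WL

namespace WL
section Sec
variable {A : Type*} [CommRing A] {L : Type*} [AddCommGroup L] [Module A L]

lemma secondary_of_supIrred [IsArtinian A L] {D : Submodule A L} (hD : SupIrred D) (r : A) :
    (∀ d ∈ D, ∃ d' ∈ D, r • d' = d) ∨ ∃ k : ℕ, ∀ d ∈ D, r ^ k • d = 0 := by
  let F : ℕ → Submodule A L := fun k => D.map (LinearMap.lsmul A L (r ^ k))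
  have hF : ∀ i j, i ≤ j → F j ≤ F i := by
    rintro i j hij _ ⟨d, hd, rfl⟩
    refine ⟨r ^ (j - i) • d, D.smul_mem _ hd, ?_⟩
    simp only [LinearMap.lsmul_apply, smul_smul]
    rw [← pow_add, Nat.add_sub_cancel' hij]
  obtain ⟨n, hn⟩ := IsArtinian.monotone_stabilizes
    (⟨fun i => OrderDual.toDual (F i), fun i j hij => hF i j hij⟩ : ℕ →o (Submodule A L)ᵒᵈ)
  have hn' : ∀ m, n ≤ m → F n = F m := hn
  have hk : F (n + 1) = F ((n + 1) + (n + 1)) := (hn' _ (by omega)).symm.trans (hn' _ (by omega))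
  have hsup : F (n + 1) ⊔ (D ⊓ LinearMap.ker (LinearMap.lsmul A L (r ^ (n + 1)))) = D := by
    apply le_antisymm
    · refine sup_le ?_ inf_le_left
      rintro _ ⟨d, hd, rfl⟩
      exact D.smul_mem _ hd
    · intro d hd
      have : r ^ (n + 1) • d ∈ F ((n + 1) + (n + 1)) := hk ▸ ⟨d, hd, rfl⟩
      obtain ⟨d', hd', he⟩ := this
      rw [LinearMap.lsmul_apply, pow_add, mul_smul] at he
      refine Submodule.mem_sup.mpr ⟨r ^ (n + 1) • d', ⟨d', hd', rfl⟩, d - r ^ (n + 1) • d',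
        ⟨D.sub_mem hd (D.smul_mem _ hd'), ?_⟩, by abel⟩
      rw [SetLike.mem_coe, LinearMap.mem_ker, LinearMap.lsmul_apply, smul_sub, he, sub_self]
  rcases hD.2 hsup with h | h
  · left
    intro d hd
    rw [← h] at hd
    obtain ⟨d', hd', rfl⟩ := hd
    exact ⟨r ^ n • d', D.smul_mem _ hd', by rw [LinearMap.lsmul_apply, smul_smul, pow_succ']⟩
  · right
    refine ⟨n + 1, fun d hd => ?_⟩
    rw [← h] at hd
    exact hd.2

lemma mem_radical_ann {D : Submodule A L} {r : A} :
    r ∈ D.annihilator.radical ↔ ∃ k : ℕ, ∀ d ∈ D, r ^ k • d = 0 := by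
  rw [Ideal.mem_radical_iff]
  simp only [Submodule.mem_annihilator]

lemma prime_of_supIrred [IsArtinian A L] {D : Submodule A L} (hD : SupIrred D) :
    D.annihilator.radical.IsPrime := by
  refine Ideal.IsPrime.mk ?_ ?_
  · intro h
    have h1 : (1 : A) ∈ D.annihilator.radical := h ▸ Submodule.mem_top
    obtain ⟨k, hk⟩ := mem_radical_ann.mp h1
    apply hD.1
    have : D = ⊥ := by
      rw [eq_bot_iff]
      intro d hd
      simpa using hk d hd
    rw [this]
    exact isMin_bot
  · intro r s hrs
    rcases secondary_of_supIrred hD r with h | h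
    · right
      obtain ⟨k, hk⟩ := mem_radical_ann.mp hrs
      refine mem_radical_ann.mpr ⟨k, ?_⟩
      have hpow : ∀ j : ℕ, ∀ d ∈ D, ∃ d' ∈ D, r ^ j • d' = d := by
        intro j
        induction j with
        | zero => intro d hd; exact ⟨d, hd, by simp⟩
        | succ j ih =>
          intro d hd
          obtain ⟨d1, hd1, rfl⟩ := h d hd
          obtain ⟨d2, hd2, rfl⟩ := ih d1 hd1
          exact ⟨d2, hd2, by rw [pow_succ', mul_smul]⟩
      intro d hd
      obtain ⟨d', hd', rfl⟩ := hpow k d hd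
      rw [smul_smul, ← mul_pow, mul_comm, hk d' hd']
    · left
      exact mem_radical_ann.mpr h

lemma secondary [IsArtinian A L] (I : Ideal A) (hI : I.FG) (P : Submodule A L) :
    ∃ x ∈ I, ∃ n : ℕ, ∀ a ∈ I ^ n, ∀ p ∈ P, ∃ p' ∈ P, a • p = x • p' := by
  classical
  obtain ⟨s, hs, hirr⟩ := exists_supIrred_decomposition P
  have hx : ∃ x ∈ I, ∀ D ∈ s, ¬ I ≤ D.annihilator.radical → x ∉ D.annihilator.radical := by
    have := Ideal.subset_union_prime (R := A) (s := s.filter fun D => ¬ I ≤ D.annihilator.radical)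
      (f := fun D => D.annihilator.radical) ⊥ ⊥
      (fun D hD _ _ => prime_of_supIrred (hirr (Finset.mem_filter.mp hD).1)) (I := I)
    by_contra! hcon
    have h2 : (I : Set A) ⊆ ⋃ D ∈ (↑(s.filter fun D => ¬ I ≤ D.annihilator.radical) : Set (Submodule A L)),
        (D.annihilator.radical : Set A) := by
      intro x hx
      obtain ⟨D, hD, h1, h2⟩ := hcon x hx
      simp only [Set.mem_iUnion]
      exact ⟨D, by simp [hD, h1], h2⟩
    obtain ⟨D, hD, h3⟩ := this.mp h2
    exact (Finset.mem_filter.mp hD).2 h3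
  obtain ⟨x, hxI, hx⟩ := hx
  have hn : ∀ D : Submodule A L, ∃ n : ℕ, I ≤ D.annihilator.radical → I ^ n ≤ D.annihilator := by
    intro D
    by_cases h : I ≤ D.annihilator.radical
    · obtain ⟨n, hn⟩ := Ideal.exists_pow_le_of_le_radical_of_fg h hI
      exact ⟨n, fun _ => hn⟩
    · exact ⟨0, fun h' => absurd h' h⟩
  choose n hn using hn
  refine ⟨x, hxI, s.sup n, fun a ha => ?_⟩
  have : P ≤ (P.map (LinearMap.lsmul A L x)).comap (LinearMap.lsmul A L a) := by
    conv_lhs => rw [← hs]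
    refine Finset.sup_le fun D hD d hd => ?_
    have hDP : D ≤ P := hs ▸ Finset.le_sup (f := id) hD
    by_cases h : I ≤ D.annihilator.radical
    · have h1 := hn D h (Ideal.pow_le_pow_right (Finset.le_sup hD) ha)
      have h2 : a • d = 0 := Submodule.mem_annihilator.mp h1 d hd
      simp [h2]
    · rcases secondary_of_supIrred (hirr hD) x with h1 | h1
      · obtain ⟨d', hd', rfl⟩ := h1 d hd
        exact ⟨a • d', hDP (D.smul_mem _ hd'), by simp [smul_comm a x d']⟩
      · exact absurd (mem_radical_ann.mpr h1) (hx D hD h)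
  intro p hp
  obtain ⟨p', hp', he⟩ := this hp
  exact ⟨p', hp', he.symm⟩

end Sec
end WL

namespace WL
section Bad
variable {R}

/-- Primes over `𝔞` lying below infinitely many primes. -/
def IsBad (𝔞 q : Ideal R) : Prop :=
  q.IsPrime ∧ 𝔞 ≤ q ∧ {p : PrimeSpectrum R | q ≤ p.asIdeal}.Infinite

variable {𝔞 : Ideal R}

lemma IsBad.minimal (hdim : ringKrullDim (R ⧸ 𝔞) = 1) {q : Ideal R} (hq : IsBad 𝔞 q) :
    q ∈ 𝔞.minimalPrimes := by
  have hK : Ring.KrullDimLE 1 (R ⧸ 𝔞) := by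
    rw [Ring.krullDimLE_iff, hdim]; rfl
  rw [Ring.krullDimLE_one_iff] at hK
  have hqp := hq.1
  have hker : RingHom.ker (Ideal.Quotient.mk 𝔞) ≤ q := by rw [Ideal.mk_ker]; exact hq.2.1
  have hp : (q.map (Ideal.Quotient.mk 𝔞)).IsPrime :=
    Ideal.map_isPrime_of_surjective Ideal.Quotient.mk_surjective hker
  have hcomap : (q.map (Ideal.Quotient.mk 𝔞)).comap (Ideal.Quotient.mk 𝔞) = q := by
    rw [Ideal.comap_map_of_surjective _ Ideal.Quotient.mk_surjective, ← RingHom.ker_eq_comap_bot]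
    exact sup_eq_left.mpr hker
  rcases hK _ hp with h | h
  · rw [Ideal.minimalPrimes_eq_comap]
    exact ⟨_, h, hcomap⟩
  · exfalso
    have hmax : q.IsMaximal := by
      rw [← hcomap]
      exact Ideal.comap_isMaximal_of_surjective _ Ideal.Quotient.mk_surjective
    refine hq.2.2 (Set.Subsingleton.finite ?_)
    intro a ha b hb
    have h1 := hmax.eq_of_le a.2.ne_top ha
    have h2 := hmax.eq_of_le b.2.ne_top hb
    exact PrimeSpectrum.ext (h1.symm.trans h2)

lemma IsBad.eq_of_le (hdim : ringKrullDim (R ⧸ 𝔞) = 1) {p q : Ideal R} (hq : IsBad 𝔞 q)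
    (hp : p.IsPrime) (h : 𝔞 ≤ p) (hpq : p ≤ q) : p = q :=
  le_antisymm hpq ((hq.minimal hdim).2 ⟨hp, h⟩ hpq)

lemma bad_finite [IsNoetherianRing R] (hdim : ringKrullDim (R ⧸ 𝔞) = 1) :
    {q | IsBad 𝔞 q}.Finite :=
  (Ideal.finite_minimalPrimes_of_isNoetherianRing R 𝔞).subset fun _ hq => IsBad.minimal hdim hq

variable (𝔞) in
/-- Complement of the union of the bad primes. -/
def Sig : Submonoid R where
  carrier := {s | ∀ q, IsBad 𝔞 q → s ∉ q}
  one_mem' := fun _ hq h => hq.1.ne_top ((Ideal.eq_top_iff_one _).mpr h)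
  mul_mem' := fun ha hb q hq h => (hq.1.mem_or_mem h).elim (ha q hq) (hb q hq)

lemma exists_sig [IsNoetherianRing R] (hdim : ringKrullDim (R ⧸ 𝔞) = 1) (I : Ideal R)
    (h : ∀ q, IsBad 𝔞 q → ¬ I ≤ q) : ∃ s ∈ I, s ∈ Sig 𝔞 := by
  by_contra! hcon
  have hfin := bad_finite hdim
  have := Ideal.subset_union_prime (R := R) (s := hfin.toFinset)
      (f := fun q => q) ⊥ ⊥ (fun q hq _ _ => ((Set.Finite.mem_toFinset _).mp hq).1) (I := I)
  obtain ⟨q, hq, hIq⟩ := this.mp (by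
    intro x hx
    have h1 : ¬ ∀ q, IsBad 𝔞 q → x ∉ q := hcon x hx
    push Not at h1
    obtain ⟨q, hq, hxq⟩ := h1
    simp only [Set.mem_iUnion]
    exact ⟨q, by simpa using hq, hxq⟩)
  have hq2 : q ∈ {q | IsBad 𝔞 q} := (Set.Finite.mem_toFinset hfin).mp hq
  exact h q hq2 hIq

lemma isBad_of_disjoint [IsNoetherianRing R] (hdim : ringKrullDim (R ⧸ 𝔞) = 1) {p : Ideal R}
    (hp : p.IsPrime) (h : 𝔞 ≤ p) (hd : ∀ s ∈ p, s ∉ Sig 𝔞) : IsBad 𝔞 p := by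
  by_contra hb
  obtain ⟨s, hs, hs'⟩ := exists_sig hdim p fun q hq hle => hb ((hq.eq_of_le hdim hp h hle) ▸ hq)
  exact hd s hs hs'

lemma rank_aux [IsNoetherianRing R] {q : Ideal R} (hq : IsBad 𝔞 q) [q.IsPrime]
    {V : Type u} [AddCommGroup V] [Module R V]
    [Module (R ⧸ q) V] [IsScalarTower R (R ⧸ q) V] (hV : IsWeaklyLaskerian R V) :
    ∃ F : Set V, F.Finite ∧ ∀ v : V, ∃ s ∉ q, s • v ∈ Submodule.span R F := by
  obtain ⟨S, hS, hmax⟩ := exists_maximal_linearIndepOn (R ⧸ q) (id : V → V)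
  rw [Set.image_id] at hmax
  refine ⟨S, ?_, ?_⟩
  · by_contra hinf
    have hinf : S.Infinite := hinf
    let e := hinf.natEmbedding
    have hli : LinearIndependent (R ⧸ q) (fun i : ℕ => ((e i : S) : V)) :=
      LinearIndependent.comp hS e e.injective
    let m := hq.2.2.natEmbedding
    have hWL : IsWeaklyLaskerian R (ℕ →₀ (R ⧸ q)) :=
      of_injective ((Finsupp.linearCombination (R ⧸ q) (fun i : ℕ => ((e i : S) : V))).restrictScalars R)
        hli hV
    let N : Submodule R (ℕ →₀ (R ⧸ q)) :=
      ⨅ i, Submodule.comap (Finsupp.lapply i) (Submodule.map (Submodule.mkQ q) (m i).1.asIdeal)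
    have hfin := hWL N
    have hass : ∀ i, (m i).1.asIdeal ∈ associatedPrimes R ((ℕ →₀ (R ⧸ q)) ⧸ N) := by
      intro i
      refine isAssociatedPrime_iff.mpr ⟨(m i).1.2, N.mkQ (Finsupp.single i (Submodule.mkQ q 1)), ?_⟩
      ext r
      rw [Submodule.mem_colon_singleton, ← map_smul, Submodule.mem_bot, Submodule.mkQ_apply,
        Submodule.Quotient.mk_eq_zero, Submodule.mem_iInf]
      have h1 : ∀ r : R, r • (Finsupp.single i (Submodule.mkQ q 1)) =
          Finsupp.single i (Submodule.mkQ q r) := by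
        intro r
        rw [Finsupp.smul_single, ← map_smul, smul_eq_mul, mul_one]
      rw [h1]
      constructor
      · intro hr j
        rw [Submodule.mem_comap, Finsupp.lapply_apply]
        by_cases hij : i = j
        · subst hij
          rw [Finsupp.single_eq_same]
          exact Submodule.mem_map_of_mem hr
        · rw [Finsupp.single_eq_of_ne (Ne.symm hij)]
          exact Submodule.zero_mem _
      · intro h
        have h2 := h i
        rw [Submodule.mem_comap, Finsupp.lapply_apply, Finsupp.single_eq_same] at h2
        obtain ⟨t, ht, he⟩ := h2
        have h3 : t - r ∈ q := (Submodule.Quotient.eq q).mp he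
        have h4 := (m i).2 h3
        simpa using Ideal.sub_mem _ ht h4
    refine Set.infinite_range_of_injective (f := fun i => (m i).1.asIdeal) ?_
      (hfin.subset (by rintro _ ⟨i, rfl⟩; exact hass i))
    intro i j hij
    exact m.injective (Subtype.ext (PrimeSpectrum.ext hij))
  · intro v
    by_cases hv : v ∈ S
    · exact ⟨1, fun h => ‹q.IsPrime›.ne_top ((Ideal.eq_top_iff_one _).mpr h),
        by rw [one_smul]; exact Submodule.subset_span hv⟩
    · obtain ⟨a, ha, h⟩ := hmax v hv
      obtain ⟨s, rfl⟩ := Ideal.Quotient.mk_surjective a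
      refine ⟨s, fun hs => ha (Ideal.Quotient.eq_zero_iff_mem.mpr hs), ?_⟩
      have h1 : (Ideal.Quotient.mk q s) • v = s • v := by
        rw [← Ideal.Quotient.algebraMap_eq, algebraMap_smul]
      rw [id, h1] at h
      have h2 := Submodule.restrictScalars_span R (R ⧸ q) Ideal.Quotient.mk_surjective S
      rw [← h2]
      exact h

lemma rank_lemma [IsNoetherianRing R] (hdim : ringKrullDim (R ⧸ 𝔞) = 1) {q : Ideal R}
    (hq : IsBad 𝔞 q) {V : Type u} [AddCommGroup V] [Module R V] (hk : ∀ a ∈ q, ∀ v : V, a • v = 0)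
    (hV : IsWeaklyLaskerian R V) :
    ∃ F : Set V, F.Finite ∧ ∀ v : V, ∃ s ∈ Sig 𝔞, s • v ∈ Submodule.span R F := by
  have := hq.1
  have ht : Module.IsTorsionBySet R V (q : Set R) := fun v a => hk a.1 a.2 v
  let _ := ht.module
  have : IsScalarTower R (R ⧸ q) V := ht.isScalarTower
  obtain ⟨F, hF, h⟩ := rank_aux hq hV
  refine ⟨F, hF, fun v => ?_⟩
  obtain ⟨s, hs, hsv⟩ := h v
  obtain ⟨t, ht, hts⟩ := exists_sig hdim (Ideal.span {s} ⊔ q) (by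
    intro p hp hle
    have h1 : q = p := hp.eq_of_le hdim hq.1 hq.2.1 (le_sup_right.trans hle)
    apply hs
    rw [h1]
    exact hle (le_sup_left (a := Ideal.span {s}) (Ideal.mem_span_singleton_self s)))
  refine ⟨t, hts, ?_⟩
  obtain ⟨a, ha, b, hb, rfl⟩ := Submodule.mem_sup.mp ht
  obtain ⟨c, rfl⟩ := Ideal.mem_span_singleton'.mp ha
  rw [add_smul, hk b hb, add_zero, mul_smul]
  exact Submodule.smul_mem _ _ hsv

end Bad
end WL

namespace WL
section Loc
variable {R} {S : Submonoid R} {A : Type*} [CommRing A] [Algebra R A] [IsLocalization S A]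
  {M : Type*} [AddCommGroup M] [Module R M]
  {L : Type*} [AddCommGroup L] [Module R L] [Module A L] [IsScalarTower R A L]
  (φ : M →ₗ[R] L) [IsLocalizedModule S φ]

lemma loc_unit_mem (N : Submodule A L) {s : R} (hs : s ∈ S) {y : L} (h : s • y ∈ N) : y ∈ N := by
  have hu : IsUnit (algebraMap R A s) := IsLocalization.map_units A (⟨s, hs⟩ : S)
  obtain ⟨b, hb⟩ := hu.exists_left_inv
  have : y = b • (s • y) := by
    rw [← algebraMap_smul A s y, smul_smul, hb, one_smul]
  rw [this]
  exact N.smul_mem _ h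

variable (S) in
lemma loc_surj (y : L) : ∃ m : M, ∃ s ∈ S, s • y = φ m := by
  obtain ⟨⟨m, s⟩, h⟩ := IsLocalizedModule.surj S φ y
  exact ⟨m, s, s.2, h⟩

variable (S) in
lemma loc_eq_zero {m : M} (h : φ m = 0) : ∃ s ∈ S, s • m = 0 := by
  obtain ⟨c, hc⟩ := (IsLocalizedModule.eq_zero_iff S φ).mp h
  exact ⟨c, c.2, hc⟩

lemma loc_kill (I : Ideal R) (y : L) (h : ∀ a ∈ I, a • y = 0) :
    ∀ x ∈ I.map (algebraMap R A), x • y = 0 := by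
  have : I.map (algebraMap R A) ≤ Submodule.comap (LinearMap.toSpanSingleton A L y) ⊥ := by
    rw [Ideal.map_le_iff_le_comap]
    intro a ha
    simpa using h a ha
  intro x hx
  simpa using this hx

/-- A common denominator for a finitely generated ideal. -/
lemma sig_kill_fg (I : Ideal R) (hI : I.FG) (m : M) (h : ∀ a ∈ I, ∃ s ∈ S, s • a • m = 0) :
    ∃ s ∈ S, ∀ a ∈ I, s • a • m = 0 := by
  classical
  obtain ⟨t, rfl⟩ := hI
  have h1 : ∀ a : R, ∃ s ∈ S, a ∈ t → s • a • m = 0 := by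
    intro a
    by_cases ha : a ∈ t
    · obtain ⟨s, hs, h2⟩ := h a (Submodule.subset_span ha)
      exact ⟨s, hs, fun _ => h2⟩
    · exact ⟨1, S.one_mem, fun h3 => absurd h3 ha⟩
  choose c hc hc2 using h1
  refine ⟨∏ a ∈ t, c a, S.prod_mem fun a _ => hc a, ?_⟩
  have : Submodule.span R (t : Set R) ≤ Submodule.comap (LinearMap.toSpanSingleton R M
      ((∏ a ∈ t, c a) • m)) ⊥ := by
    rw [Submodule.span_le]
    intro a ha
    obtain ⟨d, hd⟩ := Finset.dvd_prod_of_mem c ha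
    simp only [SetLike.mem_coe, Submodule.mem_comap, LinearMap.toSpanSingleton_apply,
      Submodule.mem_bot]
    rw [hd, smul_comm, mul_comm, mul_smul, hc2 a ha, smul_zero]
  intro a ha
  rw [smul_comm]
  simpa using this ha

end Loc

section Art
variable {R} {𝔞 : Ideal R}

lemma artinian_span {A : Type*} [CommRing A] {L : Type*} [AddCommGroup L] [Module A L]
    (P : Ideal A) [P.IsMaximal] {v : L} (hv : v ∈ tors P L) :
    IsArtinian A (Submodule.span A {v}) := by
  have : IsSimpleModule A (A ⧸ P) := isSimpleModule_iff_isCoatom.mpr (Ideal.IsMaximal.out)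
  have h := isArtinian_range (Submodule.liftQ P (LinearMap.toSpanSingleton A L v)
    (fun a ha => by simpa using hv a ha))
  rwa [Submodule.range_liftQ, LinearMap.range_toSpanSingleton] at h

lemma artinian_prod {A : Type*} [CommRing A] [IsNoetherianRing A] {L : Type*} [AddCommGroup L]
    [Module A L] (I : Ideal A) (h : ∀ P : Ideal A, P.IsPrime → I ≤ P → IsArtinian A (tors P L)) :
    IsArtinian A (tors I L) := by
  classical
  have hfin := I.finite_minimalPrimes_of_isNoetherianRing A
  let t := hfin.toFinset
  have htop : IsArtinian A (tors (1 : Ideal A) L) := by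
    have : Subsingleton (tors (1 : Ideal A) L) := by
      refine ⟨fun x y => Subtype.ext ?_⟩
      have hx := x.2 1 (by simp)
      have hy := y.2 1 (by simp)
      rw [one_smul] at hx hy
      rw [hx, hy]
    infer_instance
  have h1 : ∀ t : Finset (Ideal A), (∀ P ∈ t, P.IsPrime ∧ I ≤ P) →
      IsArtinian A (tors (∏ P ∈ t, P) L) := by
    intro t
    induction t using Finset.induction_on with
    | empty => intro _; rw [Finset.prod_empty]; exact htop
    | insert P t hP ih =>
      intro ht
      rw [Finset.prod_insert hP]
      refine artinian_tors_mul _ _ (IsNoetherian.noetherian _) ?_ ?_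
      · exact h P (ht P (by simp)).1 (ht P (by simp)).2
      · exact ih fun Q hQ => ht Q (by simp [hQ])
  have h2 := h1 t (fun P hP => by
    have : P ∈ I.minimalPrimes := (Set.Finite.mem_toFinset hfin).mp hP
    exact this.1)
  have h3 : ∀ n : ℕ, IsArtinian A (tors ((∏ P ∈ t, P) ^ n) L) := by
    intro n
    induction n with
    | zero => rw [pow_zero]; exact htop
    | succ n ih =>
      rw [pow_succ]
      exact artinian_tors_mul _ _ (IsNoetherian.noetherian _) ih h2
  have h4 : (∏ P ∈ t, P) ≤ I.radical := by
    rw [← Ideal.sInf_minimalPrimes]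
    refine le_sInf fun P hP => ?_
    refine Ideal.prod_le_inf.trans ?_
    exact Finset.inf_le (f := fun P => P) ((Set.Finite.mem_toFinset hfin).mpr hP)
  obtain ⟨n, hn⟩ := Ideal.exists_pow_le_of_le_radical_of_fg h4 (IsNoetherian.noetherian _)
  exact artinian_of_le (tors_anti hn) (h3 n)

variable {A : Type*} [CommRing A] [Algebra R A] [IsLocalization (Sig 𝔞) A]
  {M : Type u} [AddCommGroup M] [Module R M]
  {L : Type*} [AddCommGroup L] [Module R L] [Module A L] [IsScalarTower R A L]

lemma artinian_loc (φ : M →ₗ[R] L) [IsLocalizedModule (Sig 𝔞) φ] [IsNoetherianRing R] (hdim : ringKrullDim (R ⧸ 𝔞) = 1)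
    (hM : IsWeaklyLaskerian R (tors 𝔞 M)) (ht : ∀ m : M, ∃ n : ℕ, ∀ a ∈ 𝔞 ^ n, a • m = 0) :
    IsArtinian A L := by
  have hA : IsNoetherianRing A := IsLocalization.isNoetherianRing (Sig 𝔞) A inferInstance
  refine artinian_of_tors (𝔞.map (algebraMap R A)) (IsNoetherian.noetherian _) ?_ ?_
  · intro l x hx
    obtain ⟨m, s, hs, h⟩ := loc_surj (Sig 𝔞) φ l
    obtain ⟨n, hn⟩ := ht m
    refine ⟨n, ?_⟩
    refine loc_kill (𝔞 ^ n) l ?_ _ (by rw [Ideal.map_pow]; exact Ideal.pow_mem_pow hx n)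
    intro a ha
    have : a • l ∈ (⊥ : Submodule A L) := by
      refine loc_unit_mem (S := Sig 𝔞) _ hs ?_
      rw [smul_comm, h, ← map_smul, hn a ha, map_zero]
      exact Submodule.zero_mem _
    simpa using this
  · refine artinian_prod _ fun P hP hle => ?_
    have hbad : ∀ Q : Ideal A, Q.IsPrime → 𝔞.map (algebraMap R A) ≤ Q →
        IsBad 𝔞 (Q.comap (algebraMap R A)) := by
      intro Q hQ hQle
      refine isBad_of_disjoint hdim (Ideal.comap_isPrime _ _) (Ideal.map_le_iff_le_comap.mp hQle) ?_
      intro s hs hs'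
      exact hQ.ne_top (Ideal.eq_top_of_isUnit_mem _ hs (IsLocalization.map_units A (⟨s, hs'⟩ : Sig 𝔞)))
    have hmax : P.IsMaximal := by
      obtain ⟨Q, hQ, hPQ⟩ := P.exists_le_maximal hP.ne_top
      have h1 := (hbad Q hQ.isPrime (hle.trans hPQ)).eq_of_le hdim (Ideal.comap_isPrime _ P)
        (Ideal.map_le_iff_le_comap.mp hle) (Ideal.comap_mono hPQ)
      have h2 : P = Q := by
        have e1 : Ideal.map (algebraMap R A) (Ideal.comap (algebraMap R A) P) = P :=
          IsLocalization.map_under (Sig 𝔞) A P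
        have e2 : Ideal.map (algebraMap R A) (Ideal.comap (algebraMap R A) Q) = Q :=
          IsLocalization.map_under (Sig 𝔞) A Q
        rw [← e1, h1, e2]
      rw [h2]; exact hQ
    set q := P.comap (algebraMap R A) with hq
    have hPq : q.map (algebraMap R A) = P := IsLocalization.map_under (Sig 𝔞) A P
    have hqb : IsBad 𝔞 q := hbad P hP hle
    have hV : IsWeaklyLaskerian R (tors q M) :=
      of_injective (Submodule.inclusion (tors_anti hqb.2.1)) (Submodule.inclusion_injective _) hM
    obtain ⟨F, hF, hspan⟩ := rank_lemma hdim hqb (V := tors q M)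
      (fun a ha v => Subtype.ext (v.2 a ha)) hV
    let w : F → L := fun f => φ (f : tors q M)
    have hw : ∀ f, w f ∈ tors P L := by
      intro f x hx
      rw [← hPq] at hx
      refine loc_kill q _ ?_ x hx
      intro a ha
      simp only [w]
      rw [← map_smul, f.1.2 a ha, map_zero]
    have : Finite F := hF
    have hart : IsArtinian A (Submodule.span A (Set.range w)) := by
      rw [Submodule.span_range_eq_iSup]
      have : ∀ i, IsArtinian A (Submodule.span A {w i}) := fun i => artinian_span P (hw i)
      infer_instance
    refine artinian_of_le (fun l hl => ?_) hart
    obtain ⟨m, s, hs, h⟩ := loc_surj (Sig 𝔞) φ l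
    obtain ⟨t, htS, htm⟩ := sig_kill_fg (S := Sig 𝔞) q (IsNoetherian.noetherian _) m (by
      intro a ha
      refine loc_eq_zero (Sig 𝔞) φ ?_
      have h1 : algebraMap R A a • l = 0 := hl _ ha
      rw [map_smul, ← h, smul_comm, ← algebraMap_smul A a l, h1, smul_zero])
    have htm' : t • m ∈ tors q M := fun a ha => by rw [smul_comm, htm a ha]
    obtain ⟨s', hs', h2⟩ := hspan ⟨t • m, htm'⟩
    refine loc_unit_mem (S := Sig 𝔞) _ hs (loc_unit_mem (S := Sig 𝔞) _ htS
      (loc_unit_mem (S := Sig 𝔞) _ hs' ?_))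
    rw [h, ← map_smul, ← map_smul]
    have h3 : Submodule.span R F ≤ Submodule.comap (φ ∘ₗ (tors q M).subtype)
        ((Submodule.span A (Set.range w)).restrictScalars R) := by
      rw [Submodule.span_le]
      intro f hf
      exact Submodule.subset_span ⟨⟨f, hf⟩, rfl⟩
    exact h3 h2

end Art
end WL

namespace WL
section Main
variable {R} {𝔞 : Ideal R}

/-- Elementwise torsion with respect to an ideal. -/
def IsTors (𝔞 : Ideal R) (B : Type u) [AddCommGroup B] [Module R B] : Prop :=
  ∀ m : B, ∃ n : ℕ, ∀ a ∈ 𝔞 ^ n, a • m = 0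

variable {B C : Type u} [AddCommGroup B] [Module R B] [AddCommGroup C] [Module R C]

lemma IsTors.of_injective (f : B →ₗ[R] C) (hf : Function.Injective f) (h : IsTors 𝔞 C) :
    IsTors 𝔞 B := by
  intro m
  obtain ⟨n, hn⟩ := h (f m)
  refine ⟨n, fun a ha => hf ?_⟩
  rw [map_smul, hn a ha, map_zero]

lemma IsTors.of_surjective (f : B →ₗ[R] C) (hf : Function.Surjective f) (h : IsTors 𝔞 B) :
    IsTors 𝔞 C := by
  intro m
  obtain ⟨b, rfl⟩ := hf m
  obtain ⟨n, hn⟩ := h b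
  refine ⟨n, fun a ha => ?_⟩
  rw [← map_smul, hn a ha, map_zero]

lemma isTors_of_support [IsNoetherianRing R]
    (h : Module.support R B ⊆ PrimeSpectrum.zeroLocus (𝔞 : Set R)) : IsTors 𝔞 B := by
  intro m
  have h1 : 𝔞 ≤ (R ∙ m).annihilator.radical := by
    rw [Ideal.radical_eq_sInf]
    refine le_sInf ?_
    rintro p ⟨hp, hprime⟩
    exact h (Module.mem_support_iff_exists_annihilator (p := ⟨p, hprime⟩).mpr ⟨m, hp⟩)
  obtain ⟨n, hn⟩ := Ideal.exists_pow_le_of_le_radical_of_fg h1 (IsNoetherian.noetherian _)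
  exact ⟨n, fun a ha => (Submodule.mem_annihilator_span_singleton _ _).mp (hn ha)⟩

variable (𝔞 B) in
lemma nonempty_ext_zero_equiv : Nonempty (E 𝔞 0 B ≃ₗ[R] tors 𝔞 B) := by
  let e1 : E 𝔞 0 B ≃ₗ[R] (ModuleCat.of R (R ⧸ 𝔞) ⟶ ModuleCat.of R B) := Abelian.Ext.linearEquiv₀
  let e2 : (ModuleCat.of R (R ⧸ 𝔞) ⟶ ModuleCat.of R B) ≃ₗ[R] ((R ⧸ 𝔞) →ₗ[R] B) :=
    ModuleCat.homLinearEquiv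
  let g : ((R ⧸ 𝔞) →ₗ[R] B) →ₗ[R] tors 𝔞 B :=
    LinearMap.codRestrict (tors 𝔞 B) (LinearMap.applyₗ (Submodule.mkQ 𝔞 1)) (by
      intro f a ha
      rw [LinearMap.applyₗ_apply_apply, ← map_smul, ← map_smul, smul_eq_mul, mul_one,
        Submodule.mkQ_apply, (Submodule.Quotient.mk_eq_zero _).mpr ha, map_zero])
  have hg : Function.Bijective g := by
    constructor
    · intro f f' h
      have h1 : f (Submodule.mkQ 𝔞 1) = f' (Submodule.mkQ 𝔞 1) := congrArg Subtype.val h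
      refine LinearMap.ext fun y => ?_
      obtain ⟨r, rfl⟩ := Submodule.mkQ_surjective 𝔞 y
      have : Submodule.mkQ 𝔞 r = r • Submodule.mkQ 𝔞 1 := by
        rw [← map_smul, smul_eq_mul, mul_one]
      rw [this, map_smul, map_smul, h1]
    · rintro ⟨b, hb⟩
      refine ⟨Submodule.liftQ 𝔞 (LinearMap.toSpanSingleton R B b) (fun a ha => by
        simpa using hb a ha), Subtype.ext ?_⟩
      exact one_smul R b
  exact ⟨(e1.trans e2).trans (LinearEquiv.ofBijective g hg)⟩

lemma ext_zero_iff : IsWeaklyLaskerian R (E 𝔞 0 B) ↔ IsWeaklyLaskerian R (tors 𝔞 B) :=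
  iff_of_equiv (nonempty_ext_zero_equiv 𝔞 B).some

lemma wl_tors_pow [IsNoetherianRing R] (h : IsWeaklyLaskerian R (tors 𝔞 B)) (n : ℕ) :
    IsWeaklyLaskerian R (tors (𝔞 ^ n) B) := by
  induction n with
  | zero =>
    have : Subsingleton (tors (𝔞 ^ 0) B) := by
      refine ⟨fun x y => Subtype.ext ?_⟩
      have hx := x.2 1 (by simp)
      have hy := y.2 1 (by simp)
      rw [one_smul] at hx hy
      rw [hx, hy]
    exact of_subsingleton
  | succ n ih =>
    rw [pow_succ]
    obtain ⟨k, f, g, hfg⟩ := tors_mul_exact (L := B) (𝔞 ^ n) 𝔞 (IsNoetherian.noetherian _)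
    exact of_exact f g hfg.ge h (pi_fin ih k)

lemma supp_finite [IsNoetherianRing R] (ht : IsTors 𝔞 B) (h0 : IsWeaklyLaskerian R (tors 𝔞 B))
    (h : ∀ b : B, ∃ s ∈ Sig 𝔞, s • b = 0) : (Module.support R B).Finite := by
  have hAss : (associatedPrimes R (tors 𝔞 B)).Finite := by
    exact (h0 ⊥).subset (associatedPrimes.subset_of_injective
      (Submodule.quotEquivOfEqBot (⊥ : Submodule R (tors 𝔞 B)) rfl).symm.injective)
  have key : ∀ p ∈ associatedPrimes R B, p ∈ associatedPrimes R (tors 𝔞 B) ∧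
      {P : PrimeSpectrum R | p ≤ P.asIdeal}.Finite := by
    intro p hp
    obtain ⟨hprime, x, hx⟩ := isAssociatedPrime_iff.mp hp
    have hmem : ∀ r, r ∈ p ↔ r • x = 0 := by
      intro r
      rw [hx, Submodule.mem_colon_singleton, Submodule.mem_bot]
    have hap : 𝔞 ≤ p := by
      obtain ⟨n, hn⟩ := ht x
      exact hprime.le_of_pow_le (n := n) fun a ha => (hmem a).mpr (hn a ha)
    have hxt : x ∈ tors 𝔞 B := fun a ha => (hmem a).mp (hap ha)
    refine ⟨isAssociatedPrime_iff.mpr ⟨hprime, ⟨x, hxt⟩, ?_⟩, ?_⟩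
    · ext r
      rw [Submodule.mem_colon_singleton, Submodule.mem_bot, hmem, Subtype.ext_iff]
      rfl
    · by_contra hinf
      obtain ⟨s, hs, hsx⟩ := h x
      exact hs p ⟨hprime, hap, hinf⟩ ((hmem s).mpr hsx)
  have hAssB : (associatedPrimes R B).Finite := hAss.subset fun p hp => (key p hp).1
  refine (hAssB.biUnion fun p hp => (key p hp).2).subset ?_
  intro P hP
  obtain ⟨m, hm⟩ := Module.mem_support_iff_exists_annihilator.mp hP
  have := P.2
  obtain ⟨p, hp, hpP⟩ := Ideal.exists_minimalPrimes_le hm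
  have h1 := Module.associatedPrimes.minimalPrimes_annihilator_subset_associatedPrimes R (R ∙ m) hp
  have h2 := associatedPrimes.subset_of_injective (Submodule.injective_subtype (R ∙ m)) h1
  simp only [Set.mem_iUnion]
  exact ⟨p, h2, hpP⟩

lemma ext_of_almost [IsNoetherianRing R] (ht : IsTors 𝔞 B) (h0 : IsWeaklyLaskerian R (E 𝔞 0 B))
    (n : ℕ) (h : ∀ a ∈ 𝔞 ^ n, ∀ b : B, ∃ s ∈ Sig 𝔞, s • a • b = 0) (i : ℕ) :
    IsWeaklyLaskerian R (E 𝔞 i B) := by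
  let B' : Submodule R B := 𝔞 ^ n • ⊤
  have hB' : ∀ b ∈ B', ∃ s ∈ Sig 𝔞, s • b = 0 := by
    intro b hb
    refine Submodule.smul_induction_on hb (fun a ha b _ => h a ha b) ?_
    rintro x y ⟨s, hs, hsx⟩ ⟨t, ht, hty⟩
    refine ⟨s * t, (Sig 𝔞).mul_mem hs ht, ?_⟩
    rw [smul_add, mul_smul, mul_smul, hty, smul_zero, add_zero, smul_comm, hsx, smul_zero]
  have h0' : IsWeaklyLaskerian R (E 𝔞 0 B') := ext_zero 𝔞 B'.subtype B'.injective_subtype h0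
  have hW : IsWeaklyLaskerian R B' := of_finite_support (supp_finite
    (ht.of_injective B'.subtype B'.injective_subtype) (ext_zero_iff.mp h0') (by
      rintro ⟨b, hb⟩
      obtain ⟨s, hs, hsb⟩ := hB' b hb
      exact ⟨s, hs, Subtype.ext hsb⟩))
  have hfin : Module.Finite R (ModuleCat.of R (R ⧸ 𝔞)) :=
    inferInstanceAs (Module.Finite R (R ⧸ 𝔞))
  have hE' : ∀ i, IsWeaklyLaskerian R (E 𝔞 i B') := fun i => ext_finite_left _ _ hW i
  have hex : Function.Exact B'.subtype B'.mkQ := by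
    intro b
    simp
  have h0Q : IsWeaklyLaskerian R (E 𝔞 0 (B ⧸ B')) :=
    ext_right 𝔞 B'.subtype B'.mkQ B'.injective_subtype hex B'.mkQ_surjective 0 h0 (hE' 1)
  have hQ : IsWeaklyLaskerian R (B ⧸ B') := by
    refine of_surjective (tors (𝔞 ^ n) (B ⧸ B')).subtype ?_ (wl_tors_pow (ext_zero_iff.mp h0Q) n)
    intro y
    refine ⟨⟨y, fun a ha => ?_⟩, rfl⟩
    obtain ⟨b, rfl⟩ := B'.mkQ_surjective y
    rw [← map_smul, Submodule.mkQ_apply, Submodule.Quotient.mk_eq_zero]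
    exact Submodule.smul_mem_smul ha trivial
  have hEQ : IsWeaklyLaskerian R (E 𝔞 i (B ⧸ B')) := ext_finite_left _ _ hQ i
  exact ext_mid 𝔞 B'.subtype B'.mkQ B'.injective_subtype hex B'.mkQ_surjective i (hE' i) hEQ

end Main
end WL

namespace WL
section Induct
variable {R} {𝔞 : Ideal R}
variable {A : Type*} [CommRing A] [Algebra R A] [IsLocalization (Sig 𝔞) A]
  {M : Type u} [AddCommGroup M] [Module R M]
  {L : Type*} [AddCommGroup L] [Module R L] [Module A L] [IsScalarTower R A L]

/-- The localized submodule. -/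
def locSub {R : Type*} [CommRing R] (A : Type*) [CommRing A] [Algebra R A]
    {B L : Type*} [AddCommGroup B] [Module R B]
    [AddCommGroup L] [Module R L] [Module A L] (ψ : B →ₗ[R] L) : Submodule A L :=
  Submodule.span A (Set.range ψ)

lemma mem_locSub {B : Type u} [AddCommGroup B] [Module R B]
    (ψ : B →ₗ[R] L) {y : L} (hy : y ∈ locSub A ψ) : ∃ b : B, ∃ s ∈ Sig 𝔞, s • y = ψ b := by
  refine Submodule.span_induction ?_ ?_ ?_ ?_ hy
  · rintro _ ⟨b, rfl⟩
    exact ⟨b, 1, (Sig 𝔞).one_mem, one_smul _ _⟩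
  · exact ⟨0, 1, (Sig 𝔞).one_mem, by simp⟩
  · rintro x y _ _ ⟨b, s, hs, hb⟩ ⟨c, t, ht, hc⟩
    refine ⟨t • b + s • c, s * t, (Sig 𝔞).mul_mem hs ht, ?_⟩
    rw [map_add, map_smul, map_smul, ← hb, ← hc, smul_add, mul_smul, mul_smul, smul_comm s t x]
  · rintro c x _ ⟨b, s, hs, hb⟩
    obtain ⟨⟨r, t⟩, h⟩ := IsLocalization.surj (Sig 𝔞) c
    simp only at h
    refine ⟨r • b, t * s, (Sig 𝔞).mul_mem t.2 hs, ?_⟩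
    have h1 : (t : R) • c • x = r • x := by
      rw [← algebraMap_smul A (t : R) (c • x), smul_smul, mul_comm, h, algebraMap_smul]
    rw [map_smul, ← hb, mul_comm, mul_smul, h1, smul_comm]

lemma main_induction (φ : M →ₗ[R] L) [IsLocalizedModule (Sig 𝔞) φ] [IsNoetherianRing R] [IsArtinian A L] (hM : IsTors 𝔞 M) (P : Submodule A L) :
    ∀ (B : Type u) [AddCommGroup B] [Module R B] (j : B →ₗ[R] M), Function.Injective j →
      locSub A (φ ∘ₗ j) = P → IsWeaklyLaskerian R (E 𝔞 0 B) → IsWeaklyLaskerian R (E 𝔞 1 B) →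
      ∀ i, IsWeaklyLaskerian R (E 𝔞 i B) := by
  have hA : IsNoetherianRing A := IsLocalization.isNoetherianRing (Sig 𝔞) A inferInstance
  induction P using WellFoundedLT.induction with
  | ind P ih =>
  intro B _ _ j hj hP h0 h1
  obtain ⟨z, hz, n, hzn⟩ := secondary (𝔞.map (algebraMap R A)) (IsNoetherian.noetherian _) P
  obtain ⟨⟨⟨x, hx⟩, t⟩, hxt⟩ := (IsLocalization.mem_map_algebraMap_iff (Sig 𝔞) A).mp hz
  simp only at hxt
  have hB : IsTors 𝔞 B := hM.of_injective j hj
  have hzero : ∀ b : B, φ (j b) = 0 → ∃ s ∈ Sig 𝔞, s • b = 0 := by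
    intro b hb
    obtain ⟨s, hs, h⟩ := loc_eq_zero (Sig 𝔞) φ hb
    exact ⟨s, hs, hj (by rw [map_smul, h, map_zero])⟩
  have star : ∀ a ∈ 𝔞 ^ n, ∀ b : B, ∃ s ∈ Sig 𝔞, ∃ b' : B, s • a • b = x • b' := by
    intro a ha b
    have hbP : φ (j b) ∈ P := hP ▸ Submodule.subset_span ⟨b, rfl⟩
    obtain ⟨p, hp, hap⟩ := hzn (algebraMap R A a)
      (by rw [← Ideal.map_pow]; exact Ideal.mem_map_of_mem _ ha) _ hbP
    rw [algebraMap_smul] at hap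
    rw [← hP] at hp
    obtain ⟨c, s, hs, hc⟩ := mem_locSub (𝔞 := 𝔞) (φ ∘ₗ j) hp
    have hc : s • p = φ (j c) := hc
    have h2 : (t : R) • z • p = x • p := by
      rw [← algebraMap_smul A (t : R) (z • p), smul_smul, mul_comm, hxt, algebraMap_smul]
    obtain ⟨w, hw, h3⟩ := hzero ((s * t : R) • a • b - x • c) (by
      simp only [map_sub, map_smul]
      rw [hap, ← hc, mul_smul, h2, smul_comm, sub_self])
    refine ⟨w * (s * t), (Sig 𝔞).mul_mem hw ((Sig 𝔞).mul_mem hs t.2), w • c, ?_⟩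
    rw [smul_sub, sub_eq_zero] at h3
    rw [mul_smul, h3, smul_comm]
  let μ := LinearMap.lsmul R B x
  let K := LinearMap.ker μ
  let T := LinearMap.range μ
  have hle : locSub A (φ ∘ₗ (j ∘ₗ K.subtype)) ≤ P := by
    rw [← hP]
    refine Submodule.span_mono ?_
    rintro _ ⟨k, rfl⟩
    exact ⟨k, rfl⟩
  rcases hle.eq_or_lt with heq | hlt
  · have hxP : ∀ b : B, ∃ s ∈ Sig 𝔞, s • x • b = 0 := by
      intro b
      refine hzero _ ?_
      have hbP : φ (j b) ∈ P := hP ▸ Submodule.subset_span ⟨b, rfl⟩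
      have h2 : P ≤ LinearMap.ker (LinearMap.lsmul A L (algebraMap R A x)) := by
        rw [← heq]
        refine Submodule.span_le.mpr ?_
        rintro _ ⟨⟨k, hk⟩, rfl⟩
        have hk : x • k = 0 := hk
        simp only [SetLike.mem_coe, LinearMap.mem_ker, LinearMap.lsmul_apply, algebraMap_smul,
          LinearMap.comp_apply, Submodule.subtype_apply]
        rw [← map_smul, ← map_smul, hk, map_zero, map_zero]
      have h3 := h2 hbP
      rw [LinearMap.mem_ker, LinearMap.lsmul_apply, algebraMap_smul] at h3
      rw [map_smul, map_smul, h3]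
    refine ext_of_almost hB h0 n ?_
    intro a ha b
    obtain ⟨s, hs, b', h2⟩ := star a ha b
    obtain ⟨s', hs', h3⟩ := hxP b'
    exact ⟨s' * s, (Sig 𝔞).mul_mem hs' hs, by rw [mul_smul, h2, h3]⟩
  · have hT0 : IsWeaklyLaskerian R (E 𝔞 0 T) := ext_zero 𝔞 T.subtype T.injective_subtype h0
    have hK0 : IsWeaklyLaskerian R (E 𝔞 0 K) := ext_zero 𝔞 K.subtype K.injective_subtype h0
    have hexK : Function.Exact K.subtype μ.rangeRestrict := by
      intro b
      simp [K, ← LinearMap.mem_ker]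
    have hexT : Function.Exact T.subtype T.mkQ := by
      intro b
      simp
    have hK1 : IsWeaklyLaskerian R (E 𝔞 1 K) := ext_left 𝔞 K.subtype μ.rangeRestrict
      K.injective_subtype hexK μ.surjective_rangeRestrict 0 hT0 h1
    have hK := ih _ hlt K (j ∘ₗ K.subtype) (hj.comp K.injective_subtype) rfl hK0 hK1
    have hT1 : IsWeaklyLaskerian R (E 𝔞 1 T) := ext_right 𝔞 K.subtype μ.rangeRestrict
      K.injective_subtype hexK μ.surjective_rangeRestrict 1 h1 (hK 2)
    have hQ0 : IsWeaklyLaskerian R (E 𝔞 0 (B ⧸ T)) := ext_right 𝔞 T.subtype T.mkQ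
      T.injective_subtype hexT T.mkQ_surjective 0 h0 hT1
    refine ext_of_smul 𝔞 x hx hK ?_
    refine ext_of_almost (hB.of_surjective T.mkQ T.mkQ_surjective) hQ0 n ?_
    intro a ha y
    obtain ⟨b, rfl⟩ := T.mkQ_surjective y
    obtain ⟨s, hs, b', h2⟩ := star a ha b
    refine ⟨s, hs, ?_⟩
    rw [← map_smul, ← map_smul, h2, Submodule.mkQ_apply, Submodule.Quotient.mk_eq_zero]
    exact ⟨b', rfl⟩

end Induct

section Final
variable {R} {𝔞 : Ideal R}

lemma ext_all [IsNoetherianRing R] (hdim : ringKrullDim (R ⧸ 𝔞) = 1)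
    {B : Type u} [AddCommGroup B] [Module R B] (hB : IsTors 𝔞 B)
    (h0 : IsWeaklyLaskerian R (E 𝔞 0 B)) (h1 : IsWeaklyLaskerian R (E 𝔞 1 B)) (i : ℕ) :
    IsWeaklyLaskerian R (E 𝔞 i B) := by
  let φ := LocalizedModule.mkLinearMap (Sig 𝔞) B
  have : IsArtinian (Localization (Sig 𝔞)) (LocalizedModule (Sig 𝔞) B) :=
    artinian_loc φ hdim (ext_zero_iff.mp h0) hB
  exact main_induction (A := Localization (Sig 𝔞)) φ hB _ B LinearMap.id Function.injective_id rfl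
    h0 h1 i

lemma isWeaklyCofinite_iff (𝔞 : Ideal R) (B : Type u) [AddCommGroup B] [Module R B] :
    IsWeaklyCofinite R 𝔞 (ModuleCat.of R B) ↔
      Module.support R B ⊆ PrimeSpectrum.zeroLocus (𝔞 : Set R) ∧
        ∀ i, IsWeaklyLaskerian R (E 𝔞 i B) :=
  and_congr Iff.rfl (forall_congr' fun i =>
    iff_of_equiv (nonempty_extModule_equiv R i (ModuleCat.of R (R ⧸ 𝔞)) (ModuleCat.of R B)).some)

end Final
end WL

theorem stmt16 [IsNoetherianRing R] (𝔞 : Ideal R) (hdim : ringKrullDim (R ⧸ 𝔞) = 1)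
    (M N : Type u) [AddCommGroup M] [Module R M] [AddCommGroup N] [Module R N]
    (hM : IsWeaklyCofinite R 𝔞 (ModuleCat.of R M))
    (hN : IsWeaklyCofinite R 𝔞 (ModuleCat.of R N))
    (f : M →ₗ[R] N) :
    IsWeaklyCofinite R 𝔞 (ModuleCat.of R (LinearMap.ker f)) ∧
      IsWeaklyCofinite R 𝔞 (ModuleCat.of R (N ⧸ LinearMap.range f)) := by
  rw [WL.isWeaklyCofinite_iff] at hM hN ⊢
  rw [WL.isWeaklyCofinite_iff]
  obtain ⟨hMs, hME⟩ := hM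
  obtain ⟨hNs, hNE⟩ := hN
  let K := LinearMap.ker f
  let T := LinearMap.range f
  have hexK : Function.Exact K.subtype f.rangeRestrict := by
    intro b
    simp [K, ← LinearMap.mem_ker]
  have hexT : Function.Exact T.subtype T.mkQ := by
    intro b
    simp
  have hKs : Module.support R K ⊆ PrimeSpectrum.zeroLocus (𝔞 : Set R) :=
    (Module.support_subset_of_injective K.subtype K.injective_subtype).trans hMs
  have hT0 := WL.ext_zero 𝔞 T.subtype T.injective_subtype (hNE 0)
  have hK0 := WL.ext_zero 𝔞 K.subtype K.injective_subtype (hME 0)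
  have hK1 := WL.ext_left 𝔞 K.subtype f.rangeRestrict K.injective_subtype hexK
    f.surjective_rangeRestrict 0 hT0 (hME 1)
  have hKE := WL.ext_all hdim (WL.isTors_of_support hKs) hK0 hK1
  have hTE : ∀ i, IsWeaklyLaskerian R (WL.E 𝔞 i T) := fun i =>
    WL.ext_right 𝔞 K.subtype f.rangeRestrict K.injective_subtype hexK
      f.surjective_rangeRestrict i (hME i) (hKE (i + 1))
  refine ⟨⟨hKs, hKE⟩, ?_, fun i => WL.ext_right 𝔞 T.subtype T.mkQ T.injective_subtype hexT
    T.mkQ_surjective i (hNE i) (hTE (i + 1))⟩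
  exact (Module.support_subset_of_surjective T.mkQ T.mkQ_surjective).trans hNs
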